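/- The equation tan(z) + tanh(z) = 0 has a unique root ẑ₀ in the interval (0, π); this root lies in (π/2, π), and consequently ẑ₀·tanh(ẑ₀) > (π/2)·tanh(π/2) > 1. -/

import Mathlib

open Real

lemma aux_tanh_lt {x y : ℝ} (h : x < y) : Real.tanh x < Real.tanh y := by
  rw [Real.tanh_eq_sinh_div_cosh, Real.tanh_eq_sinh_div_cosh,
    div_lt_div_iff₀ (Real.cosh_pos x) (Real.cosh_pos y)]
  have h1 : 0 < Real.sinh (y - x) := Real.sinh_pos_iff.2 (sub_pos.2 h)
  rw [Real.sinh_sub] at h1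
  linarith

lemma aux_tanh_pos {x : ℝ} (h : 0 < x) : 0 < Real.tanh x := by
  simpa using aux_tanh_lt h

lemma aux_gt {z : ℝ} (hz : z ∈ Set.Ioo (0:ℝ) π) (h : Real.tan z + Real.tanh z = 0) :
    π / 2 < z := by
  by_contra hc
  have h1 := aux_tanh_pos hz.1
  have h2 := Real.tan_nonneg_of_nonneg_of_le_pi_div_two hz.1.le (not_lt.1 hc)
  linarith

lemma aux_lt {z w : ℝ} (hz : π / 2 < z) (hw : w < π) (h : z < w) :
    Real.tan z + Real.tanh z < Real.tan w + Real.tanh w := by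
  have h1 := aux_tanh_lt h
  have h2 : Real.tan (z - π) < Real.tan (w - π) :=
    Real.tan_lt_tan_of_lt_of_lt_pi_div_two (by linarith) (by linarith [Real.pi_pos]) (by linarith)
  rw [Real.tan_sub_pi, Real.tan_sub_pi] at h2
  linarith

lemma aux_exists : ∃ z : ℝ, z ∈ Set.Ioo 0 π ∧ Real.tan z + Real.tanh z = 0 := by
  have hpi := Real.pi_pos
  have hc : ContinuousOn (fun z => Real.sin z * Real.cosh z + Real.cos z * Real.sinh z)
      (Set.Icc (π / 2) π) := by
    apply Continuous.continuousOn
    have := Real.continuous_cosh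
    have := Real.continuous_sinh
    fun_prop
  have h0 := intermediate_value_Ioo' (by linarith : π / 2 ≤ π) hc
  have hm : (0:ℝ) ∈ Set.Ioo (Real.sin π * Real.cosh π + Real.cos π * Real.sinh π)
      (Real.sin (π/2) * Real.cosh (π/2) + Real.cos (π/2) * Real.sinh (π/2)) := by
    have := Real.sinh_pos_iff.2 hpi
    have := Real.cosh_pos (π/2)
    constructor <;> simp <;> assumption
  obtain ⟨z, hz, h⟩ := h0 hm
  refine ⟨z, ⟨by linarith [hz.1], hz.2⟩, ?_⟩
  have hcos : Real.cos z < 0 :=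
    Real.cos_neg_of_pi_div_two_lt_of_lt hz.1 (by linarith [hz.2])
  have hch := Real.cosh_pos z
  rw [Real.tan_eq_sin_div_cos, Real.tanh_eq_sinh_div_cosh,
    div_add_div _ _ hcos.ne hch.ne']
  simp only at h
  rw [h, zero_div]

lemma aux_one : 1 < π / 2 * Real.tanh (π / 2) := by
  have hpi := Real.pi_gt_d2
  have h1 : Real.tanh 1 < Real.tanh (π / 2) := aux_tanh_lt (by linarith)
  have h2 : (0.7:ℝ) < Real.tanh 1 := by
    have he := Real.exp_one_gt_d9
    have hp : Real.exp 1 * Real.exp (-1) = 1 := by rw [← Real.exp_add]; simp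
    have hf := Real.exp_pos (-1)
    rw [Real.tanh_eq, lt_div_iff₀ (by positivity)]
    nlinarith
  nlinarith

/-- The equation `tan z + tanh z = 0` has a unique root `ẑ₀` in the interval
`(0,π)`; this root lies in `(π/2, π)`, and consequently
`ẑ₀·tanh ẑ₀ > (π/2)·tanh(π/2) > 1`. -/
theorem tan_add_tanh_unique_root :
    (∃! z : ℝ, z ∈ Set.Ioo 0 π ∧ Real.tan z + Real.tanh z = 0) ∧
    (∀ z ∈ Set.Ioo (0:ℝ) π, Real.tan z + Real.tanh z = 0 →
      π / 2 < z ∧ π / 2 * Real.tanh (π / 2) < z * Real.tanh z) ∧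
    1 < π / 2 * Real.tanh (π / 2) := by
  refine ⟨?_, ?_, aux_one⟩
  · obtain ⟨z, hz, h⟩ := aux_exists
    refine ⟨z, ⟨hz, h⟩, ?_⟩
    rintro w ⟨hw, h'⟩
    rcases lt_trichotomy w z with hl | hl | hl
    · have := aux_lt (aux_gt hw h') hz.2 hl
      linarith
    · exact hl
    · have := aux_lt (aux_gt hz h) hw.2 hl
      linarith
  · intro z hz h
    have hg := aux_gt hz h
    have hp : 0 < π / 2 := by positivity
    exact ⟨hg, mul_lt_mul'' hg (aux_tanh_lt hg) hp.le (aux_tanh_pos hp).le⟩
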